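/- There exists a constant C depending only on m and δ such that for every measurable Z : ℝ² → ℂ: ‖⟨k⟩^{−1/2}·A(k)^{2δ}·p^{−1/4}·Z‖_{L¹(ℝ²)} ≤ C·‖⟨k⟩^m·A(k)^{2δ}·min(|k|^{1/4},1)·p^{−1/4}·Z‖_{L²_k L¹_η} ≤ C·(1 + μ^{−δ})·E. -/

import Mathlib

open MeasureTheory Real
open scoped ENNReal NNReal

noncomputable section

/-- The Japanese bracket `⟨k⟩ = (1+k²)^{1/2}`. -/
def jap (k : ℝ) : ℝ := Real.sqrt (1 + k ^ 2)

/-- The moving-frame symbol `p(k,η) = k² + (η − kt)²`. -/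
def pw (t k η : ℝ) : ℝ := k ^ 2 + (η - k * t) ^ 2

/-- The weight `A(k)`. -/
def Aw (μ k : ℝ) : ℝ :=
  if |k| < μ then 1 else μ ^ ((1 : ℝ) / 3) * |k| ^ (-(1 : ℝ) / 3)

/-- The weight `B(k)`. -/
def Bw (μ k : ℝ) : ℝ :=
  if |k| < μ then μ ^ (-(1 : ℝ) / 2) else μ ^ ((1 : ℝ) / 6) * |k| ^ (-(2 : ℝ) / 3)

/-- Weighted `L¹(ℝ²)` norm `‖w·Z‖_{L¹}` (iterated, value in `[0,∞]`). -/
def L1n (w : ℝ → ℝ → ℝ) (Z : ℝ × ℝ → ℂ) : ℝ≥0∞ :=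
  ∫⁻ k : ℝ, ∫⁻ η : ℝ, ENNReal.ofReal (w k η) * (‖Z (k, η)‖₊ : ℝ≥0∞)

/-- Weighted `L²(ℝ²)` norm `‖w·Z‖_{L²}` (value in `[0,∞]`). -/
def L2n (w : ℝ → ℝ → ℝ) (Z : ℝ × ℝ → ℂ) : ℝ≥0∞ :=
  (∫⁻ k : ℝ, ∫⁻ η : ℝ,
      (ENNReal.ofReal (w k η) * (‖Z (k, η)‖₊ : ℝ≥0∞)) ^ 2) ^ ((1 : ℝ) / 2)

/-- Weighted mixed norm `‖w·Z‖_{L²_k L¹_η}` (value in `[0,∞]`). -/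
def L2L1n (w : ℝ → ℝ → ℝ) (Z : ℝ × ℝ → ℂ) : ℝ≥0∞ :=
  (∫⁻ k : ℝ,
      (∫⁻ η : ℝ, ENNReal.ofReal (w k η) * (‖Z (k, η)‖₊ : ℝ≥0∞)) ^ 2) ^ ((1 : ℝ) / 2)

/-- The energy `E = ‖⟨k⟩^m Z‖_{L²} + ‖⟨k⟩^m A(k)(η−kt) Z‖_{L²}`. -/
def En (t μ m : ℝ) (Z : ℝ × ℝ → ℂ) : ℝ≥0∞ :=
  L2n (fun k _ => jap k ^ m) Z + L2n (fun k η => jap k ^ m * Aw μ k * |η - k * t|) Z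

/-- The dissipation `D_γ = μ·∬ ⟨k⟩^{2m} p |Z|²`. -/
def Dg (t μ m : ℝ) (Z : ℝ × ℝ → ℂ) : ℝ≥0∞ :=
  ENNReal.ofReal μ * ∫⁻ k : ℝ, ∫⁻ η : ℝ,
    ENNReal.ofReal (jap k ^ (2 * m) * pw t k η) * (‖Z (k, η)‖₊ : ℝ≥0∞) ^ 2

/-- The dissipation `D_τ = ∬ ⟨k⟩^{2m} k² p⁻¹ |Z|²`. -/
def Dtau (t m : ℝ) (Z : ℝ × ℝ → ℂ) : ℝ≥0∞ :=
  ∫⁻ k : ℝ, ∫⁻ η : ℝ,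
    ENNReal.ofReal (jap k ^ (2 * m) * k ^ 2 / pw t k η) * (‖Z (k, η)‖₊ : ℝ≥0∞) ^ 2

/-- The dissipation `D_α = μ·∬ ⟨k⟩^{2m} A(k)² (η−kt)² p |Z|²`. -/
def Dal (t μ m : ℝ) (Z : ℝ × ℝ → ℂ) : ℝ≥0∞ :=
  ENNReal.ofReal μ * ∫⁻ k : ℝ, ∫⁻ η : ℝ,
    ENNReal.ofReal (jap k ^ (2 * m) * Aw μ k ^ 2 * (η - k * t) ^ 2 * pw t k η)
      * (‖Z (k, η)‖₊ : ℝ≥0∞) ^ 2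

/-- The dissipation `D_{τα} = ∬ ⟨k⟩^{2m} A(k)² k² (η−kt)² p⁻¹ |Z|²`. -/
def Dta (t μ m : ℝ) (Z : ℝ × ℝ → ℂ) : ℝ≥0∞ :=
  ∫⁻ k : ℝ, ∫⁻ η : ℝ,
    ENNReal.ofReal (jap k ^ (2 * m) * Aw μ k ^ 2 * k ^ 2 * (η - k * t) ^ 2 / pw t k η)
      * (‖Z (k, η)‖₊ : ℝ≥0∞) ^ 2

/-- The dissipation `D_β = ∬ ⟨k⟩^{2m} B(k)² k² |Z|²`. -/
def Db (t μ m : ℝ) (Z : ℝ × ℝ → ℂ) : ℝ≥0∞ :=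
  ∫⁻ k : ℝ, ∫⁻ η : ℝ,
    ENNReal.ofReal (jap k ^ (2 * m) * Bw μ k ^ 2 * k ^ 2) * (‖Z (k, η)‖₊ : ℝ≥0∞) ^ 2

/-!
Both inequalities are Cauchy–Schwarz with an explicit weight. For the first, integrate in `k`
against `⟨k⟩^{-1/2-m} / min(|k|^{1/4}, 1)`, whose square is of size `|k|^{-1/2}` near the origin
and `|k|^{-1-2m}` at infinity. For the second, integrate in `η` on each fibre against
`A^{2δ} min(|k|^{1/4}, 1) p^{-1/4} / ⟨A (η - kt)⟩`. Splitting
`p^{-1/2} ≤ |k|^{-4δ} |s|^{4δ-1}` with `s = η - kt`, the power of `k` is absorbed by the minimum as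
soon as `δ ≤ 1/8`, and what remains of the square is `A |As|^{4δ-1} ⟨As⟩^{-2}`, whose integral in
`s` does not depend on `A`. Hence no power of `μ` is lost; for `δ > 1/8` one uses `A ≤ 1` to
replace `δ` by `1/8`.
-/

section LIntegral

variable {α : Type*} [MeasurableSpace α] {ν : Measure α} {f g : α → ℝ≥0∞}

lemma lintegral_mul_le_L2_mul_L2 (hf : AEMeasurable f ν) (hg : AEMeasurable g ν) :
    ∫⁻ x, f x * g x ∂ν
      ≤ (∫⁻ x, f x ^ 2 ∂ν) ^ ((1 : ℝ) / 2) * (∫⁻ x, g x ^ 2 ∂ν) ^ ((1 : ℝ) / 2) := by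
  simpa only [ENNReal.rpow_two, Pi.mul_apply] using
    ENNReal.lintegral_mul_le_Lp_mul_Lq ν Real.HolderConjugate.two_two hf hg

lemma sq_lintegral_mul_le (hf : AEMeasurable f ν) (hg : AEMeasurable g ν) :
    (∫⁻ x, f x * g x ∂ν) ^ 2 ≤ (∫⁻ x, f x ^ 2 ∂ν) * ∫⁻ x, g x ^ 2 ∂ν := by
  have rpow_half_sq (x : ℝ≥0∞) : (x ^ ((1 : ℝ) / 2)) ^ 2 = x := by
    rw [← ENNReal.rpow_mul_natCast]; norm_num
  simpa only [mul_pow, rpow_half_sq] using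
    pow_le_pow_left₀ zero_le (lintegral_mul_le_L2_mul_L2 hf hg) 2

lemma ofReal_abs_mul_lintegral_comp_mul_left (f : ℝ → ℝ≥0∞) {a : ℝ} (ha : a ≠ 0) :
    ENNReal.ofReal |a| * ∫⁻ x, f (a * x) = ∫⁻ x, f x := by
  have hmap : ∫⁻ x, f x ∂Measure.map (a * ·) volume = ∫⁻ x, f (a * x) :=
    (Homeomorph.mulLeft₀ a ha).measurableEmbedding.lintegral_map f
  conv_rhs => rw [← Real.smul_map_volume_mul_left ha, lintegral_smul_measure, hmap, smul_eq_mul]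

end LIntegral

section JapaneseBracket

lemma one_le_jap (k : ℝ) : 1 ≤ jap k := Real.one_le_sqrt.2 (by linarith [sq_nonneg k])

lemma jap_pos (k : ℝ) : 0 < jap k := one_pos.trans_le (one_le_jap k)

lemma abs_le_jap (k : ℝ) : |k| ≤ jap k := Real.abs_le_sqrt (by linarith)

lemma jap_le_one_add_abs (k : ℝ) : jap k ≤ 1 + |k| := by
  simpa only [jap, Real.norm_eq_abs, sq_abs] using sqrt_one_add_norm_sq_le k

lemma jap_abs (k : ℝ) : jap |k| = jap k := by simp only [jap, sq_abs]

lemma continuous_jap : Continuous jap := by unfold jap; fun_prop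

lemma measurable_jap : Measurable jap := continuous_jap.measurable

lemma integrable_abs_rpow_mul_jap_rpow {a b : ℝ} (ha : -1 < a) (hab : a + b < -1) :
    Integrable fun x : ℝ => |x| ^ a * jap x ^ b := by
  have hb : b < 0 := by linarith
  have hcont : Continuous fun x => jap x ^ b :=
    continuous_jap.rpow_const fun x => .inl (jap_pos x).ne'
  have hdecay : (fun x => jap x ^ b) =O[Filter.atTop] fun x : ℝ => x ^ (-(-b)) := by
    refine .of_bound' ?_
    filter_upwards [Filter.eventually_gt_atTop 0] with x hx
    rw [neg_neg, Real.norm_of_nonneg (rpow_nonneg (jap_pos x).le b),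
      Real.norm_of_nonneg (rpow_nonneg hx.le b)]
    exact rpow_le_rpow_of_nonpos hx ((le_abs_self x).trans (abs_le_jap x)) hb.le
  have hbdd : (fun x => jap x ^ b) =O[nhdsWithin 0 (Set.Ioi 0)] fun x : ℝ => x ^ (-(0 : ℝ)) := by
    simpa only [neg_zero, rpow_zero] using
      (hcont.tendsto 0).isBigO_one ℝ |>.mono nhdsWithin_le_nhds
  have hIoi : IntegrableOn (fun x : ℝ => x ^ a * jap x ^ b) (Set.Ioi 0) := by
    simpa only [add_sub_cancel_right] using
      mellin_convergent_of_isBigO_scalar (s := a + 1)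
        (hcont.locallyIntegrable.locallyIntegrableOn _) hdecay (by linarith) hbdd (by linarith)
  have := (integrable_fun_norm_addHaar (E := ℝ) volume (f := fun x => x ^ a * jap x ^ b)).2
    (by simpa using hIoi)
  simpa only [Real.norm_eq_abs, jap_abs] using this

lemma lintegral_abs_rpow_mul_jap_rpow_ne_top {a b : ℝ} (ha : -1 < a) (hab : a + b < -1) :
    ∫⁻ x : ℝ, ENNReal.ofReal (|x| ^ a * jap x ^ b) ≠ ∞ :=
  (integrable_abs_rpow_mul_jap_rpow ha hab).lintegral_lt_top.ne

end JapaneseBracket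

section Weights

lemma Aw_pos {μ : ℝ} (hμ : 0 < μ) (k : ℝ) : 0 < Aw μ k := by
  unfold Aw
  split_ifs with h
  · exact one_pos
  · have : 0 < |k| := hμ.trans_le (not_lt.1 h)
    positivity

lemma Aw_le_one {μ : ℝ} (hμ : 0 < μ) (k : ℝ) : Aw μ k ≤ 1 := by
  unfold Aw
  split_ifs with h
  · exact le_rfl
  · have hk : μ ≤ |k| := not_lt.1 h
    have hk0 : 0 < |k| := hμ.trans_le hk
    calc μ ^ ((1 : ℝ) / 3) * |k| ^ (-(1 : ℝ) / 3)
        ≤ |k| ^ ((1 : ℝ) / 3) * |k| ^ (-(1 : ℝ) / 3) := by gcongr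
      _ = 1 := by rw [← rpow_add hk0]; norm_num

lemma measurable_Aw (μ : ℝ) : Measurable (Aw μ) :=
  .ite (measurableSet_lt (by fun_prop) (by fun_prop)) (by fun_prop) (by fun_prop)

lemma measurable_pw (t : ℝ) : Measurable fun x : ℝ × ℝ => pw t x.1 x.2 := by
  unfold pw; fun_prop

lemma pw_nonneg (t k η : ℝ) : 0 ≤ pw t k η := by unfold pw; positivity

lemma rpow_add_div_two_pw_le {a b t k η : ℝ} (ha : a ≤ 0) (hb : b ≤ 0) (hk : k ≠ 0)
    (hη : η ≠ k * t) : pw t k η ^ ((a + b) / 2) ≤ |k| ^ a * |η - k * t| ^ b := by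
  have hs : η - k * t ≠ 0 := sub_ne_zero.2 hη
  have hp : 0 < pw t k η := by unfold pw; positivity
  have rpow_half_le {x c : ℝ} (hx : x ≠ 0) (hxp : x ^ 2 ≤ pw t k η) (hc : c ≤ 0) :
      pw t k η ^ (c / 2) ≤ |x| ^ c := by
    rw [rpow_div_two_eq_sqrt c hp.le]
    exact rpow_le_rpow_of_nonpos (abs_pos.2 hx) (Real.abs_le_sqrt hxp) hc
  rw [add_div, rpow_add hp]
  exact mul_le_mul (rpow_half_le hk (le_add_of_nonneg_right (sq_nonneg _)) ha)
    (rpow_half_le hs (le_add_of_nonneg_left (sq_nonneg _)) hb) (by positivity) (by positivity)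

lemma min_abs_rpow_one_sq_mul_le_one {c r k : ℝ} (hr : 0 ≤ r) (hrc : r ≤ 2 * c) (hk : k ≠ 0) :
    min (|k| ^ c) 1 ^ 2 * |k| ^ (-r) ≤ 1 := by
  have hk0 : 0 < |k| := abs_pos.2 hk
  rcases le_total |k| 1 with h | h
  · calc min (|k| ^ c) 1 ^ 2 * |k| ^ (-r) ≤ (|k| ^ c) ^ 2 * |k| ^ (-r) := by
          gcongr; exact min_le_left _ _
      _ = |k| ^ (c * 2 - r) := by rw [← rpow_mul_natCast hk0.le, ← rpow_add hk0]; rfl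
      _ ≤ 1 := rpow_le_one hk0.le h (by linarith)
  · calc min (|k| ^ c) 1 ^ 2 * |k| ^ (-r) ≤ 1 ^ 2 * |k| ^ (-r) := by
          gcongr; exact min_le_right _ _
      _ ≤ 1 := by
          rw [one_pow, one_mul]
          exact rpow_le_one_of_one_le_of_nonpos h (neg_nonpos.2 hr)

end Weights

section MixedNorms

variable {v w : ℝ → ℝ → ℝ} {Z : ℝ × ℝ → ℂ}

lemma L1n_congr_ae (h : ∀ᵐ k, ∀ η, v k η = w k η) : L1n v Z = L1n w Z :=
  lintegral_congr_ae (h.mono fun k hk => by simp only [hk])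

lemma L2n_mono (h : ∀ k η, v k η ≤ w k η) : L2n v Z ≤ L2n w Z := by
  unfold L2n
  gcongr with k η
  exact h k η

lemma L2L1n_mono (h : ∀ k η, v k η ≤ w k η) : L2L1n v Z ≤ L2L1n w Z := by
  unfold L2L1n
  gcongr with k η
  exact h k η

lemma L2n_add_le (hv : Measurable fun x : ℝ × ℝ => v x.1 x.2)
    (hw : Measurable fun x : ℝ × ℝ => w x.1 x.2) (hZ : Measurable Z) :
    L2n (fun k η => v k η + w k η) Z ≤ L2n v Z + L2n w Z := by
  have L2n_eq {u : ℝ → ℝ → ℝ} (hu : Measurable fun x : ℝ × ℝ => u x.1 x.2) : L2n u Z =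
      (∫⁻ x : ℝ × ℝ, (ENNReal.ofReal (u x.1 x.2) * (‖Z x‖₊ : ℝ≥0∞)) ^ 2) ^ ((1 : ℝ) / 2) := by
    rw [Measure.volume_eq_prod, lintegral_prod _ (by fun_prop)]; rfl
  rw [L2n_eq (hv.add hw), L2n_eq hv, L2n_eq hw]
  calc _ ≤ (∫⁻ x : ℝ × ℝ, (ENNReal.ofReal (v x.1 x.2) * (‖Z x‖₊ : ℝ≥0∞)
          + ENNReal.ofReal (w x.1 x.2) * (‖Z x‖₊ : ℝ≥0∞)) ^ 2) ^ ((1 : ℝ) / 2) := by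
        gcongr with x
        rw [← add_mul]
        gcongr
        exact ENNReal.ofReal_add_le
    _ ≤ _ := by
        simpa only [ENNReal.rpow_two, Pi.add_apply] using
          ENNReal.lintegral_Lp_add_le (μ := volume) (p := 2)
            (f := fun x : ℝ × ℝ => ENNReal.ofReal (v x.1 x.2) * (‖Z x‖₊ : ℝ≥0∞))
            (g := fun x : ℝ × ℝ => ENNReal.ofReal (w x.1 x.2) * (‖Z x‖₊ : ℝ≥0∞))
            (by fun_prop) (by fun_prop) one_le_two

lemma L1n_mul_le {g : ℝ → ℝ} (hg : Measurable g) (hg0 : ∀ k, 0 ≤ g k)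
    (hv : Measurable fun x : ℝ × ℝ => v x.1 x.2) (hZ : Measurable Z) :
    L1n (fun k η => g k * v k η) Z
      ≤ (∫⁻ k, ENNReal.ofReal (g k ^ 2)) ^ ((1 : ℝ) / 2) * L2L1n v Z := by
  have hfibre : Measurable fun k => ∫⁻ η, ENNReal.ofReal (v k η) * (‖Z (k, η)‖₊ : ℝ≥0∞) :=
    Measurable.lintegral_prod_right'
      (f := fun x : ℝ × ℝ => ENNReal.ofReal (v x.1 x.2) * (‖Z x‖₊ : ℝ≥0∞)) (by fun_prop)
  simp only [L1n, ENNReal.ofReal_mul (hg0 _), mul_assoc, ENNReal.ofReal_pow (hg0 _),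
    lintegral_const_mul' _ _ ENNReal.ofReal_ne_top]
  exact lintegral_mul_le_L2_mul_L2 (by fun_prop) hfibre.aemeasurable

lemma L2L1n_mul_le {f : ℝ → ℝ → ℝ} {K : ℝ≥0∞} (hf : ∀ k, Measurable (f k))
    (hf0 : ∀ k η, 0 ≤ f k η) (hfK : ∀ᵐ k, ∫⁻ η, ENNReal.ofReal (f k η ^ 2) ≤ K)
    (hv : Measurable fun x : ℝ × ℝ => v x.1 x.2) (hZ : Measurable Z) :
    L2L1n (fun k η => f k η * v k η) Z ≤ K ^ ((1 : ℝ) / 2) * L2n v Z := by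
  have hfibre : Measurable fun k =>
      ∫⁻ η, (ENNReal.ofReal (v k η) * (‖Z (k, η)‖₊ : ℝ≥0∞)) ^ 2 :=
    Measurable.lintegral_prod_right'
      (f := fun x : ℝ × ℝ => (ENNReal.ofReal (v x.1 x.2) * (‖Z x‖₊ : ℝ≥0∞)) ^ 2) (by fun_prop)
  unfold L2L1n L2n
  rw [← ENNReal.mul_rpow_of_nonneg _ _ (by norm_num), ← lintegral_const_mul _ hfibre]
  refine ENNReal.rpow_le_rpow (lintegral_mono_ae ?_) (by norm_num)
  filter_upwards [hfK] with k hk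
  simp only [ENNReal.ofReal_mul (hf0 _ _), mul_assoc]
  refine (sq_lintegral_mul_le (by fun_prop) (by fun_prop)).trans (mul_le_mul_left ?_ _)
  simpa only [ENNReal.ofReal_pow (hf0 _ _)] using hk

end MixedNorms

section IntegrationInK

/-- The weight `⟨k⟩^{-1/2-m} / min(|k|^{1/4}, 1)` against which the `L¹_k` norm is compared with the
`L²_k` norm. At `k = 0` its value is the junk value `0`, on a null set. -/
def freqWeight (m k : ℝ) : ℝ := jap k ^ (-(1 : ℝ) / 2 - m) * (min (|k| ^ ((1 : ℝ) / 4)) 1)⁻¹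

lemma freqWeight_nonneg (m k : ℝ) : 0 ≤ freqWeight m k :=
  mul_nonneg (rpow_nonneg (jap_pos k).le _) (by positivity)

lemma measurable_freqWeight (m : ℝ) : Measurable (freqWeight m) := by
  have := measurable_jap
  unfold freqWeight; fun_prop

lemma freqWeight_mul {k : ℝ} (m : ℝ) (hk : k ≠ 0) :
    freqWeight m k * (jap k ^ m * min (|k| ^ ((1 : ℝ) / 4)) 1) = jap k ^ (-(1 : ℝ) / 2) := by
  have hmin : min (|k| ^ ((1 : ℝ) / 4)) 1 ≠ 0 := by positivity
  rw [freqWeight, mul_mul_mul_comm, inv_mul_cancel₀ hmin, mul_one, ← rpow_add (jap_pos k),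
    sub_add_cancel]

lemma freqWeight_sq_le (m k : ℝ) :
    freqWeight m k ^ 2 ≤ |k| ^ (-(1 : ℝ) / 2) * jap k ^ (-1 - 2 * m)
      + |k| ^ (0 : ℝ) * jap k ^ (-1 - 2 * m) := by
  have hjap : (jap k ^ (-(1 : ℝ) / 2 - m)) ^ 2 = jap k ^ (-1 - 2 * m) := by
    rw [← rpow_mul_natCast (jap_pos k).le]; push_cast; ring_nf
  have hpow : (|k| ^ ((1 : ℝ) / 4))⁻¹ ^ 2 = |k| ^ (-(1 : ℝ) / 2) := by
    rw [← rpow_neg (abs_nonneg k), ← rpow_mul_natCast (abs_nonneg k)]; norm_num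
  have hmin : (min (|k| ^ ((1 : ℝ) / 4)) 1)⁻¹ ^ 2 ≤ |k| ^ (-(1 : ℝ) / 2) + 1 := by
    rcases min_choice (|k| ^ ((1 : ℝ) / 4)) 1 with h | h <;> rw [h]
    · rw [hpow]; exact le_add_of_nonneg_right zero_le_one
    · rw [inv_one, one_pow]; exact le_add_of_nonneg_left (by positivity)
  rw [freqWeight, mul_pow, hjap, rpow_zero, ← add_mul, mul_comm]
  exact mul_le_mul_of_nonneg_right hmin (rpow_nonneg (jap_pos k).le _)

lemma lintegral_freqWeight_sq_ne_top {m : ℝ} (hm : 0 < m) :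
    ∫⁻ k, ENNReal.ofReal (freqWeight m k ^ 2) ≠ ∞ := by
  have hlow : Integrable fun k : ℝ => |k| ^ (-(1 : ℝ) / 2) * jap k ^ (-1 - 2 * m) :=
    integrable_abs_rpow_mul_jap_rpow (by norm_num) (by linarith)
  have hhigh : Integrable fun k : ℝ => |k| ^ (0 : ℝ) * jap k ^ (-1 - 2 * m) :=
    integrable_abs_rpow_mul_jap_rpow (by norm_num) (by linarith)
  exact ne_top_of_le_ne_top (hlow.add hhigh).lintegral_lt_top.ne
    (lintegral_mono fun k => ENNReal.ofReal_le_ofReal (freqWeight_sq_le m k))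

lemma L1n_jap_rpow_mul_le (m : ℝ) {a : ℝ → ℝ} {q : ℝ → ℝ → ℝ} {Z : ℝ × ℝ → ℂ} (ha : Measurable a)
    (hq : Measurable fun x : ℝ × ℝ => q x.1 x.2) (hZ : Measurable Z) :
    L1n (fun k η => jap k ^ (-(1 : ℝ) / 2) * a k * q k η) Z
      ≤ (∫⁻ k, ENNReal.ofReal (freqWeight m k ^ 2)) ^ ((1 : ℝ) / 2)
        * L2L1n (fun k η => jap k ^ m * a k * min (|k| ^ ((1 : ℝ) / 4)) 1 * q k η) Z := by
  have hjap := measurable_jap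
  refine (L1n_congr_ae ?_).trans_le (L1n_mul_le (measurable_freqWeight m) (freqWeight_nonneg m)
    (by fun_prop) hZ)
  filter_upwards [Measure.ae_ne volume (0 : ℝ)] with k hk η
  rw [← freqWeight_mul m hk]
  ring

end IntegrationInK

section IntegrationInEta

/-- The weight `A^{2δ} min(|k|^{1/4}, 1) p^{-1/4} / ⟨A (η - kt)⟩` against which the `L¹_η` norm of a
fibre is compared with its energy. The value `a` of `A` at `k` enters as a free parameter. -/
def fibreWeight (δ t a k η : ℝ) : ℝ :=
  a ^ (2 * δ) * min (|k| ^ ((1 : ℝ) / 4)) 1 * pw t k η ^ (-(1 : ℝ) / 4) / jap (a * (η - k * t))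

variable {δ a : ℝ}

lemma fibreWeight_nonneg (ha : 0 ≤ a) (t k η : ℝ) : 0 ≤ fibreWeight δ t a k η := by
  have := pw_nonneg t k η
  have := jap_pos (a * (η - k * t))
  unfold fibreWeight; positivity

lemma measurable_fibreWeight (δ t a k : ℝ) : Measurable (fibreWeight δ t a k) := by
  have := measurable_jap
  unfold fibreWeight pw; fun_prop

lemma fibreWeight_sq_le {t k η : ℝ} (hδ : δ ∈ Set.Ioc (0 : ℝ) (1 / 8)) (ha : 0 < a) (hk : k ≠ 0)
    (hη : η ≠ k * t) :
    fibreWeight δ t a k η ^ 2 ≤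
      a * (|a * (η - k * t)| ^ (4 * δ - 1) * jap (a * (η - k * t)) ^ (-2 : ℝ)) := by
  obtain ⟨hδ0, hδ1⟩ := hδ
  set s := η - k * t
  have hJ := jap_pos (a * s)
  have hscale : a * |a * s| ^ (4 * δ - 1) = a ^ (4 * δ) * |s| ^ (4 * δ - 1) := by
    rw [abs_mul, abs_of_pos ha, mul_rpow ha.le (abs_nonneg s), ← mul_assoc, ← rpow_one_add' ha.le
      (by linarith), add_sub_cancel]
  have hsymbol : pw t k η ^ (-(1 : ℝ) / 2) ≤ |k| ^ (-(4 * δ)) * |s| ^ (4 * δ - 1) := by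
    convert rpow_add_div_two_pw_le (a := -(4 * δ)) (b := 4 * δ - 1) (by linarith) (by linarith)
      hk hη using 2
    ring
  have ha_sq : (a ^ (2 * δ)) ^ 2 = a ^ (4 * δ) := by
    rw [← rpow_mul_natCast ha.le]; push_cast; ring_nf
  have hpw_sq : (pw t k η ^ (-(1 : ℝ) / 4)) ^ 2 = pw t k η ^ (-(1 : ℝ) / 2) := by
    rw [← rpow_mul_natCast (pw_nonneg t k η)]; norm_num
  calc fibreWeight δ t a k η ^ 2
      = a ^ (4 * δ) * min (|k| ^ ((1 : ℝ) / 4)) 1 ^ 2 * pw t k η ^ (-(1 : ℝ) / 2)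
          * jap (a * s) ^ (-2 : ℝ) := by
        rw [fibreWeight, div_pow, mul_pow, mul_pow, ha_sq, hpw_sq, div_eq_mul_inv,
          rpow_neg hJ.le, rpow_two]
    _ ≤ a ^ (4 * δ) * min (|k| ^ ((1 : ℝ) / 4)) 1 ^ 2 * (|k| ^ (-(4 * δ)) * |s| ^ (4 * δ - 1))
          * jap (a * s) ^ (-2 : ℝ) := by gcongr
    _ = (min (|k| ^ ((1 : ℝ) / 4)) 1 ^ 2 * |k| ^ (-(4 * δ)))
          * (a ^ (4 * δ) * |s| ^ (4 * δ - 1) * jap (a * s) ^ (-2 : ℝ)) := by ring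
    _ ≤ 1 * (a ^ (4 * δ) * |s| ^ (4 * δ - 1) * jap (a * s) ^ (-2 : ℝ)) := by
        gcongr
        exact min_abs_rpow_one_sq_mul_le_one (by linarith) (by linarith) hk
    _ = a * (|a * s| ^ (4 * δ - 1) * jap (a * s) ^ (-2 : ℝ)) := by
        rw [one_mul, ← hscale, mul_assoc]

lemma lintegral_fibreWeight_sq_le {k : ℝ} (hδ : δ ∈ Set.Ioc (0 : ℝ) (1 / 8)) (ha : 0 < a)
    (t : ℝ) (hk : k ≠ 0) :
    ∫⁻ η, ENNReal.ofReal (fibreWeight δ t a k η ^ 2)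
      ≤ ∫⁻ x : ℝ, ENNReal.ofReal (|x| ^ (4 * δ - 1) * jap x ^ (-2 : ℝ)) := by
  set H : ℝ → ℝ := fun x => |x| ^ (4 * δ - 1) * jap x ^ (-2 : ℝ)
  calc ∫⁻ η, ENNReal.ofReal (fibreWeight δ t a k η ^ 2)
      ≤ ∫⁻ η, ENNReal.ofReal (a * H (a * (η - k * t))) := by
        refine lintegral_mono_ae ?_
        filter_upwards [Measure.ae_ne volume (k * t)] with η hη
        exact ENNReal.ofReal_le_ofReal (fibreWeight_sq_le hδ ha hk hη)
    _ = ENNReal.ofReal |a| * ∫⁻ s, ENNReal.ofReal (H (a * s)) := by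
        simp only [ENNReal.ofReal_mul ha.le, abs_of_pos ha]
        rw [lintegral_const_mul' _ _ ENNReal.ofReal_ne_top,
          lintegral_sub_right_eq_self (fun s => ENNReal.ofReal (H (a * s)))]
    _ = ∫⁻ x, ENNReal.ofReal (H x) :=
        ofReal_abs_mul_lintegral_comp_mul_left (fun x => ENNReal.ofReal (H x)) ha.ne'

lemma L2L1n_le_L2n_add_L2n {A J : ℝ → ℝ} {Z : ℝ × ℝ → ℂ} (hδ : δ ∈ Set.Ioc (0 : ℝ) (1 / 8))
    (t : ℝ) (hA : Measurable A) (hA0 : ∀ k, 0 < A k) (hJ : Measurable J) (hJ0 : ∀ k, 0 ≤ J k)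
    (hZ : Measurable Z) :
    L2L1n (fun k η =>
        J k * A k ^ (2 * δ) * min (|k| ^ ((1 : ℝ) / 4)) 1 * pw t k η ^ (-(1 : ℝ) / 4)) Z
      ≤ (∫⁻ x : ℝ, ENNReal.ofReal (|x| ^ (4 * δ - 1) * jap x ^ (-2 : ℝ))) ^ ((1 : ℝ) / 2)
        * (L2n (fun k _ => J k) Z + L2n (fun k η => J k * A k * |η - k * t|) Z) := by
  have hjap := measurable_jap
  have hfactor (k η : ℝ) :
      J k * A k ^ (2 * δ) * min (|k| ^ ((1 : ℝ) / 4)) 1 * pw t k η ^ (-(1 : ℝ) / 4)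
        = fibreWeight δ t (A k) k η * (J k * jap (A k * (η - k * t))) := by
    have := (jap_pos (A k * (η - k * t))).ne'
    unfold fibreWeight
    field_simp
  have hbracket (k η : ℝ) :
      J k * jap (A k * (η - k * t)) ≤ J k + J k * A k * |η - k * t| :=
    calc J k * jap (A k * (η - k * t)) ≤ J k * (1 + |A k * (η - k * t)|) :=
          mul_le_mul_of_nonneg_left (jap_le_one_add_abs _) (hJ0 k)
      _ = J k + J k * A k * |η - k * t| := by rw [abs_mul, abs_of_pos (hA0 k)]; ring
  have hfibre : ∀ᵐ k, ∫⁻ η, ENNReal.ofReal (fibreWeight δ t (A k) k η ^ 2)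
      ≤ ∫⁻ x : ℝ, ENNReal.ofReal (|x| ^ (4 * δ - 1) * jap x ^ (-2 : ℝ)) :=
    (Measure.ae_ne volume (0 : ℝ)).mono fun k hk => lintegral_fibreWeight_sq_le hδ (hA0 k) t hk
  simp only [hfactor]
  exact (L2L1n_mul_le (fun k => measurable_fibreWeight δ t (A k) k)
    (fun k => fibreWeight_nonneg (hA0 k).le t k) hfibre (by fun_prop) hZ).trans
    (mul_le_mul_right ((L2n_mono hbracket).trans (L2n_add_le (by fun_prop) (by fun_prop) hZ)) _)

end IntegrationInEta

theorem stmt15_general (m δ : ℝ) (hm : 0 < m) (hδ : 0 < δ) :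
    ∃ C : ℝ, 0 < C ∧
      ∀ (t μ : ℝ), 0 < μ →
        ∀ Z : ℝ × ℝ → ℂ, Measurable Z →
          L1n (fun k η =>
              jap k ^ (-(1 : ℝ) / 2) * Aw μ k ^ (2 * δ) * pw t k η ^ (-(1 : ℝ) / 4)) Z
            ≤ ENNReal.ofReal C *
                L2L1n (fun k η =>
                  jap k ^ m * Aw μ k ^ (2 * δ) * min (|k| ^ ((1 : ℝ) / 4)) 1
                    * pw t k η ^ (-(1 : ℝ) / 4)) Z ∧
          L2L1n (fun k η =>
              jap k ^ m * Aw μ k ^ (2 * δ) * min (|k| ^ ((1 : ℝ) / 4)) 1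
                * pw t k η ^ (-(1 : ℝ) / 4)) Z
            ≤ ENNReal.ofReal C * En t μ m Z := by
  set δ' := min δ (1 / 8)
  have hδ' : δ' ∈ Set.Ioc (0 : ℝ) (1 / 8) := ⟨lt_min hδ (by norm_num), min_le_right _ _⟩
  set C₁ := (∫⁻ k, ENNReal.ofReal (freqWeight m k ^ 2)) ^ ((1 : ℝ) / 2)
  set C₂ := (∫⁻ x : ℝ, ENNReal.ofReal (|x| ^ (4 * δ' - 1) * jap x ^ (-2 : ℝ))) ^ ((1 : ℝ) / 2)
  have hC₁ : C₁ ≠ ∞ :=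
    ENNReal.rpow_ne_top_of_nonneg (by norm_num) (lintegral_freqWeight_sq_ne_top hm)
  have hC₂ : C₂ ≠ ∞ := ENNReal.rpow_ne_top_of_nonneg (by norm_num)
    (lintegral_abs_rpow_mul_jap_rpow_ne_top (by linarith [hδ'.1]) (by linarith [hδ'.2]))
  have hC : C₁ + C₂ ≤ ENNReal.ofReal ((C₁ + C₂).toReal + 1) :=
    (ENNReal.le_ofReal_iff_toReal_le (by finiteness) (by positivity)).2 (by linarith)
  refine ⟨(C₁ + C₂).toReal + 1, by positivity, fun t μ hμ Z hZ => ⟨?_, ?_⟩⟩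
  · exact (L1n_jap_rpow_mul_le m ((measurable_Aw μ).pow_const _) ((measurable_pw t).pow_const _)
      hZ).trans (mul_le_mul_left (le_self_add.trans hC) _)
  · refine (L2L1n_mono fun k η => ?_).trans ((L2L1n_le_L2n_add_L2n hδ' t (measurable_Aw μ)
      (Aw_pos hμ) (measurable_jap.pow_const m) (fun k => rpow_nonneg (jap_pos k).le m) hZ).trans
      (mul_le_mul_left (le_add_self.trans hC) _))
    have := rpow_le_rpow_of_exponent_ge (Aw_pos hμ k) (Aw_le_one hμ k)
      (mul_le_mul_of_nonneg_left (min_le_left δ (1 / 8)) zero_le_two)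
    have := jap_pos k
    have := pw_nonneg t k η
    gcongr

/-- energy-only interpolation lemma: there is `C = C(m,δ)`
such that for all `t`, `μ ∈ (0,1)` and measurable `Z`,
`‖⟨k⟩^{−1/2} A(k)^{2δ} p^{−1/4} Z‖_{L¹}
  ≤ C‖⟨k⟩^m A(k)^{2δ} min(|k|^{1/4},1) p^{−1/4} Z‖_{L²_kL¹_η} ≤ C(1+μ^{−δ})E`. -/
theorem stmt15 (m δ : ℝ) (hm : 0 < m) (hδ : δ ∈ Set.Ioo (0 : ℝ) (1 / 12)) :
    ∃ C : ℝ, 0 < C ∧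
      ∀ (t μ : ℝ), μ ∈ Set.Ioo (0 : ℝ) 1 →
        ∀ Z : ℝ × ℝ → ℂ, Measurable Z →
          L1n (fun k η =>
              jap k ^ (-(1 : ℝ) / 2) * Aw μ k ^ (2 * δ) * pw t k η ^ (-(1 : ℝ) / 4)) Z
            ≤ ENNReal.ofReal C *
                L2L1n (fun k η =>
                  jap k ^ m * Aw μ k ^ (2 * δ) * min (|k| ^ ((1 : ℝ) / 4)) 1
                    * pw t k η ^ (-(1 : ℝ) / 4)) Z ∧
          L2L1n (fun k η =>
              jap k ^ m * Aw μ k ^ (2 * δ) * min (|k| ^ ((1 : ℝ) / 4)) 1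
                * pw t k η ^ (-(1 : ℝ) / 4)) Z
            ≤ ENNReal.ofReal C * ((1 + ENNReal.ofReal (μ ^ (-δ))) * En t μ m Z) := by
  obtain ⟨C, hC, h⟩ := stmt15_general m δ hm hδ.1
  refine ⟨C, hC, fun t μ hμ Z hZ => ⟨(h t μ hμ.1 Z hZ).1, (h t μ hμ.1 Z hZ).2.trans ?_⟩⟩
  exact mul_le_mul_right (le_mul_of_one_le_left zero_le le_self_add) _
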